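/- Let A ∈ ℂ^{N×K} and B ∈ ℂ^{M×K} be matrices such that neither A nor B has an all-zero column. Then the rank of their Khatri-Rao product satisfies rank(A ⊙ B) ≥ max{rank(A), rank(B)}. -/

import Mathlib

open Matrix
open scoped BigOperators

/-!
For each fixed row index `j` of `B`, the rows `(i, j)` of `A ⊙ B` form `A` with its `k`-th column
scaled by `B j k`. Hence a relation `∑ k, g k • (A ⊙ B).col k = 0` among columns at which those of
`A` are independent forces `g k * B j k = 0` for all `j`, and `g k = 0` because some `B j k ≠ 0`.
So independent columns of `A` stay independent in `A ⊙ B`, and by symmetry so do those of `B`.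
-/

section ColumnSelection

open Module Submodule
open scoped nonZeroDivisors

variable {R : Type*} [CommRing R]

theorem finrank_span_image_mkLinearMap {M : Type*} [AddCommGroup M] [Module R M] (s : Set M) :
    finrank (FractionRing R) (span (FractionRing R) (LocalizedModule.mkLinearMap R⁰ M '' s)) =
      finrank R (span R s) := by
  rw [← localized'_span (FractionRing R) R⁰, IsFractionRing.finrank_right_eq R]
  exact IsLocalizedModule.finrank_eq R⁰
    ((span R s).toLocalized' (FractionRing R) R⁰ (LocalizedModule.mkLinearMap R⁰ M)) le_rfl

variable [IsDomain R]

theorem exists_linearIndependent_comp_fin_finrank_span {ι M : Type*} [Finite ι] [AddCommGroup M]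
    [Module R M] (v : ι → M) :
    ∃ a : Fin (finrank R (span R (Set.range v))) → ι, LinearIndependent R (v ∘ a) := by
  let toFrac := LocalizedModule.mkLinearMap R⁰ M
  obtain ⟨κ, a, a_injective, span_eq, indep⟩ :=
    exists_linearIndependent' (FractionRing R) (toFrac ∘ v)
  have : Finite κ := .of_injective a a_injective
  have := Fintype.ofFinite κ
  have card_eq : Fintype.card κ = finrank R (span R (Set.range v)) := by
    rw [← finrank_span_eq_card indep, span_eq, Set.range_comp, finrank_span_image_mkLinearMap]
  have indep_comp : LinearIndependent R (v ∘ a) := (indep.restrict_scalars' R).of_comp toFrac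
  let e := Fintype.equivFinOfCardEq card_eq
  exact ⟨a ∘ e.symm, indep_comp.comp e.symm e.symm.injective⟩

theorem exists_linearIndependent_col_comp_fin_rank {m n : Type*} [Fintype n] (A : Matrix m n R) :
    ∃ a : Fin A.rank → n, LinearIndependent R (A.col ∘ a) := by
  rw [rank_eq_finrank_span_cols]
  exact exists_linearIndependent_comp_fin_finrank_span A.col

end ColumnSelection

/-- The Khatri-Rao product `A ⊙ B`, whose `k`-th column is the Kronecker product of the `k`-th
columns of `A` and `B`; its rows are indexed by pairs, as for `Matrix.kronecker`. -/
def khatriRao {m p n R : Type*} [Mul R] (A : Matrix m n R) (B : Matrix p n R) :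
    Matrix (m × p) n R :=
  Matrix.of fun q k => A q.1 k * B q.2 k

namespace khatriRao

variable {m p n R : Type*}

theorem submatrix_swap [CommMagma R] (A : Matrix m n R) (B : Matrix p n R) :
    (khatriRao A B).submatrix Prod.swap id = khatriRao B A :=
  Matrix.ext fun _ _ => mul_comm _ _

variable [CommRing R]

theorem linearIndependent_col [NoZeroDivisors R] {A : Matrix m n R} {B : Matrix p n R}
    (hA : LinearIndependent R A.col) (hB : ∀ k, ∃ j, B j k ≠ 0) :
    LinearIndependent R (khatriRao A B).col := by
  rw [linearIndependent_iff'] at hA ⊢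
  intro s g relation k hk
  obtain ⟨j, hj⟩ := hB k
  have scaled_relation : ∑ l ∈ s, (g l * B j l) • A.col l = 0 := by
    ext i
    simpa [khatriRao, mul_assoc, mul_comm (B j _)] using congrFun relation (i, j)
  exact (mul_eq_zero.mp (hA s _ scaled_relation k hk)).resolve_right hj

variable [IsDomain R] [Fintype n]

theorem rank_left_le (A : Matrix m n R) {B : Matrix p n R} (hB : ∀ k, ∃ j, B j k ≠ 0) :
    A.rank ≤ (khatriRao A B).rank := by
  obtain ⟨a, indep⟩ := exists_linearIndependent_col_comp_fin_rank A
  have indep_product : LinearIndependent R ((khatriRao A B).submatrix id a).col :=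
    linearIndependent_col (A := A.submatrix id a) (B := B.submatrix id a) indep fun k => hB (a k)
  calc
    A.rank = ((khatriRao A B).submatrix id a).rank := by
      rw [rank_eq_finrank_span_cols (submatrix _ _ _), finrank_span_eq_card indep_product,
        Fintype.card_fin]
    _ ≤ (khatriRao A B).rank := rank_submatrix_le _ _ _

theorem rank_right_le {A : Matrix m n R} (B : Matrix p n R) (hA : ∀ k, ∃ i, A i k ≠ 0) :
    B.rank ≤ (khatriRao A B).rank :=
  calc
    B.rank ≤ (khatriRao B A).rank := rank_left_le B hA
    _ = ((khatriRao A B).submatrix Prod.swap id).rank := by rw [submatrix_swap]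
    _ ≤ (khatriRao A B).rank := rank_submatrix_le _ _ _

end khatriRao

theorem rank_khatriRao_ge_max_general {m p n R : Type*} [CommRing R] [IsDomain R] [Fintype n]
    (A : Matrix m n R) (B : Matrix p n R)
    (hA : ∀ k, ∃ i, A i k ≠ 0) (hB : ∀ k, ∃ j, B j k ≠ 0) :
    max A.rank B.rank ≤ (khatriRao A B).rank :=
  max_le (khatriRao.rank_left_le A hB) (khatriRao.rank_right_le B hA)

/-- Rank of a Khatri-Rao product: if neither `A` nor `B` has an all-zero
column, then `rank(A ⊙ B) ≥ max{rank A, rank B}`. -/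
theorem rank_khatriRao_ge_max (N M K : ℕ)
    (A : Matrix (Fin N) (Fin K) ℂ) (B : Matrix (Fin M) (Fin K) ℂ)
    (hA : ∀ k : Fin K, ∃ i : Fin N, A i k ≠ 0)
    (hB : ∀ k : Fin K, ∃ j : Fin M, B j k ≠ 0) :
    max A.rank B.rank ≤
      (Matrix.of fun (p : Fin N × Fin M) (k : Fin K) => A p.1 k * B p.2 k).rank :=
  rank_khatriRao_ge_max_general A B hA hB
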